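/- arXiv:1805.01355 — 5 statements merged into one kernel-verified Lean document; each statement's English description precedes it below -/
import Mathlib

section
/- For all k ≥ 2 and n ≥ 2 there exists a length function L : [k]^n → ℕ satisfying Kraft's inequality Σ_{x^n ∈ [k]^n} 2^{−L(x^n)} ≤ 1 such that for every stationary Markov chain (K,π) ∈ M₂(k), r_n(L,(K,π)) ≤ (2k²/n)·log₂(n/k² + 1) + k²/n + (log₂ k + 3)/n. Consequently the minimax redundancy R_n(k) over all stationary Markov sources on [k] satisfies R_n(k) ≤ (2k²/n)·log₂(n/k² + 1) + k²/n + (log₂ k + 3)/n. -/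
/-!
The code is a Shannon code for a finite mixture of Markov laws, and the argument is the method of types.

The probability of a path, apart from the factor `π` of its first letter (at most `1`), depends on the
path only through its *type*, the matrix of transition counts. By compactness, each type `c` has a
stochastic matrix `K_c` maximizing this probability (`exists_maximizer`). Let `q` be the uniform
mixture, over the types that occur, of the chains with transition matrix `K_c` and uniform initial law.
Then `q` has total mass `1`, and `p(x) ≤ k * T * q(x)` for every Markov law `p`, where `T` is the number
of types. The lengths `⌈log₂ (1 / q)⌉` satisfy Kraft's inequality and have total redundancy at most
`log₂ k + log₂ T + 1` (`exists_code`).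

To bound `T`, give each count matrix the product geometric weight `∏ x (1 - x) ^ c_ab`. The total weight
is at most `1`, while a type has weight `x ^ (k²) * (1 - x) ^ (n - 1)`. Taking
`x = 1 / (2 * (1 + n / k²))` gives `T ≤ 2 ^ (k²) * (1 + n / k²) ^ (2 k²)` (`card_le`).
-/

open scoped BigOperators

namespace Stmt1

/-- `K` is a row-stochastic (transition) matrix. -/
def IsStochastic {k : ℕ} (K : Matrix (Fin k) (Fin k) ℝ) : Prop :=
  (∀ i j, 0 ≤ K i j) ∧ ∀ i, ∑ j, K i j = 1

/-- `π` is a probability vector on `Fin k`. -/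
def IsProbVec {k : ℕ} (π : Fin k → ℝ) : Prop :=
  (∀ i, 0 ≤ π i) ∧ ∑ i, π i = 1

/-- Membership in `M₂(k)`: `(K, π)` is a stationary Markov chain on `[k]`. -/
def MemM2 {k : ℕ} (K : Matrix (Fin k) (Fin k) ℝ) (π : Fin k → ℝ) : Prop :=
  IsStochastic K ∧ IsProbVec π ∧ ∀ j, ∑ i, π i * K i j = π j

/-- The law of the stationary chain `X^n`:
`p(x^n) = π_{x₁} ∏_{i=1}^{n-1} K_{x_i x_{i+1}}`. -/
noncomputable def pathProb {k n : ℕ} (K : Matrix (Fin k) (Fin k) ℝ) (π : Fin k → ℝ)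
    (x : Fin n → Fin k) : ℝ :=
  (if h : 0 < n then π (x ⟨0, h⟩) else 1) *
    ∏ i : Fin (n - 1),
      K (x ⟨i.1, by have := i.2; omega⟩) (x ⟨i.1 + 1, by have := i.2; omega⟩)

/-- Shannon entropy (base 2) of a distribution on `(Fin k)^n`. -/
noncomputable def entropy {k n : ℕ} (p : (Fin n → Fin k) → ℝ) : ℝ :=
  ∑ x : Fin n → Fin k, p x * Real.logb 2 (1 / p x)

/-- Kraft's inequality for a length function. -/
def Kraft {k n : ℕ} (L : (Fin n → Fin k) → ℕ) : Prop :=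
  ∑ x : Fin n → Fin k, (2 : ℝ) ^ (-(L x : ℤ)) ≤ 1

/-- Redundancy `r_n(L, (K,π)) = (1/n)(E[L(X^n)] − H(X^n))`. -/
noncomputable def redundancy {k n : ℕ} (L : (Fin n → Fin k) → ℕ)
    (K : Matrix (Fin k) (Fin k) ℝ) (π : Fin k → ℝ) : ℝ :=
  (1 / (n : ℝ)) *
    ((∑ x : Fin n → Fin k, pathProb K π x * (L x : ℝ)) -
      entropy (fun x : Fin n → Fin k => pathProb K π x))

/-- The minimax redundancy `R_n(k)` over all stationary Markov sources on `[k]`. -/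
noncomputable def minimaxRedundancyM2 (k n : ℕ) : ℝ :=
  sInf {r : ℝ | ∃ L : (Fin n → Fin k) → ℕ, Kraft L ∧
    r = sSup {s : ℝ | ∃ K π, MemM2 K π ∧ s = redundancy L K π}}

/-! ### Path probabilities and types -/

/-- The product of the transition probabilities along a path with `m` steps. -/
noncomputable def stepProd {k m : ℕ} (K : Matrix (Fin k) (Fin k) ℝ) (x : Fin (m + 1) → Fin k) : ℝ :=
  ∏ i : Fin m, K (x i.castSucc) (x i.succ)

/-- The type of a path: the number of transitions for each ordered pair of letters. -/
def pathType {k m : ℕ} (x : Fin (m + 1) → Fin k) : Fin k × Fin k → ℕ :=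
  fun ab => (Finset.univ.filter fun i : Fin m => (x i.castSucc, x i.succ) = ab).card

lemma pathProb_eq {k m : ℕ} (K : Matrix (Fin k) (Fin k) ℝ) (π : Fin k → ℝ)
    (x : Fin (m + 1) → Fin k) : pathProb K π x = π (x 0) * stepProd K x := by
  unfold pathProb stepProd
  rw [dif_pos (Nat.succ_pos m)]
  rfl

lemma stepProd_nonneg {k m : ℕ} {K : Matrix (Fin k) (Fin k) ℝ} (hK : IsStochastic K)
    (x : Fin (m + 1) → Fin k) : 0 ≤ stepProd K x :=
  Finset.prod_nonneg fun _ _ => hK.1 _ _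

lemma stepProd_eq {k m : ℕ} (K : Matrix (Fin k) (Fin k) ℝ) (x : Fin (m + 1) → Fin k) :
    stepProd K x = ∏ ab : Fin k × Fin k, K ab.1 ab.2 ^ pathType x ab := by
  have h := Finset.prod_fiberwise' (Finset.univ : Finset (Fin m))
    (fun i => (x i.castSucc, x i.succ)) (fun ab : Fin k × Fin k => K ab.1 ab.2)
  simp only [Finset.prod_const] at h
  exact h.symm

lemma sum_pathType {k m : ℕ} (x : Fin (m + 1) → Fin k) : ∑ ab, pathType x ab = m := by
  have h := Finset.sum_fiberwise' (Finset.univ : Finset (Fin m))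
    (fun i => (x i.castSucc, x i.succ)) (fun _ : Fin k × Fin k => 1)
  simpa [pathType] using h

lemma sum_stepProd {k : ℕ} {K : Matrix (Fin k) (Fin k) ℝ} (hK : IsStochastic K) (m : ℕ) :
    ∀ f : Fin k → ℝ, ∑ x : Fin (m + 1) → Fin k, f (x 0) * stepProd K x = ∑ a, f a := by
  induction m with
  | zero =>
    intro f
    simp only [stepProd, Finset.univ_eq_empty, Finset.prod_empty, mul_one]
    exact Fintype.sum_equiv (Equiv.funUnique (Fin 1) (Fin k)) _ _ fun x => rfl
  | succ m ih =>
    intro f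
    -- Summing out the first letter leaves a path with one step less and initial weight `f K`.
    rw [← (Fin.consEquiv fun _ : Fin (m + 2) => Fin k).sum_comp, Fintype.sum_prod_type,
      Finset.sum_comm]
    have h : ∀ y : Fin (m + 1) → Fin k,
        ∑ a, f ((Fin.consEquiv fun _ : Fin (m + 2) => Fin k) (a, y) 0) *
          stepProd K ((Fin.consEquiv fun _ : Fin (m + 2) => Fin k) (a, y)) =
        (∑ a, f a * K a (y 0)) * stepProd K y := by
      intro y
      rw [Finset.sum_mul]
      refine Finset.sum_congr rfl fun a _ => ?_
      have : stepProd K (Fin.cons a y : Fin (m + 2) → Fin k) = K a (y 0) * stepProd K y := by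
        unfold stepProd
        rw [Fin.prod_univ_succ]
        rfl
      change f a * stepProd K (Fin.cons a y : Fin (m + 2) → Fin k) = _
      rw [this, mul_assoc]
    rw [Finset.sum_congr rfl fun y _ => h y, ih fun b => ∑ a, f a * K a b, Finset.sum_comm]
    refine Finset.sum_congr rfl fun a _ => ?_
    rw [← Finset.mul_sum, hK.2 a, mul_one]

/-- A maximum-likelihood stochastic matrix exists for each type; its likelihood is positive because
it is at least the likelihood of the uniform matrix. -/
lemma exists_maximizer {k : ℕ} (hk : 0 < k) (c : Fin k × Fin k → ℕ) :
    ∃ K : Matrix (Fin k) (Fin k) ℝ, IsStochastic K ∧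
      0 < ∏ ab : Fin k × Fin k, K ab.1 ab.2 ^ c ab ∧
      ∀ K' : Matrix (Fin k) (Fin k) ℝ, IsStochastic K' →
        ∏ ab : Fin k × Fin k, K' ab.1 ab.2 ^ c ab ≤ ∏ ab : Fin k × Fin k, K ab.1 ab.2 ^ c ab := by
  have hk' : (0 : ℝ) < k := by exact_mod_cast hk
  let S : Set (Fin k → Fin k → ℝ) := Set.univ.pi fun _ => stdSimplex ℝ (Fin k)
  have hS : IsCompact S := isCompact_univ_pi fun _ => isCompact_stdSimplex ℝ (Fin k)
  have hmem : ∀ K : Fin k → Fin k → ℝ, K ∈ S ↔ IsStochastic K := by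
    intro K
    simp only [S, Set.mem_univ_pi, stdSimplex, Set.mem_ofPred_eq, IsStochastic]
    exact forall_and
  have hU : (fun _ _ => (k : ℝ)⁻¹ : Fin k → Fin k → ℝ) ∈ S := by
    rw [hmem]
    refine ⟨fun _ _ => by positivity, fun _ => ?_⟩
    simp [hk'.ne']
  obtain ⟨K, hKS, hK⟩ := hS.exists_isMaxOn ⟨_, hU⟩
    (f := fun K : Fin k → Fin k → ℝ => ∏ ab : Fin k × Fin k, K ab.1 ab.2 ^ c ab)
    (by fun_prop)
  refine ⟨K, (hmem K).1 hKS, ?_, fun K' h' => hK ((hmem K').2 h')⟩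
  exact lt_of_lt_of_le (Finset.prod_pos fun ab _ => by positivity) (hK hU)

/-! ### Counting types -/

/-- The geometric-weight bound: at most `x ^ (-d) * (1 - x) ^ (-m)` vectors of `d` natural numbers
sum to `m`. -/
lemma card_mul_le {ι : Type*} [Fintype ι] [DecidableEq ι] (m : ℕ) (S : Finset (ι → ℕ))
    (hS : ∀ c ∈ S, ∑ i, c i = m) (x : ℝ) (h0 : 0 ≤ x) (h1 : x ≤ 1) :
    (S.card : ℝ) * (x ^ Fintype.card ι * (1 - x) ^ m) ≤ 1 := by
  have h1' : 0 ≤ 1 - x := by linarith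
  have hsub : S ⊆ Fintype.piFinset fun _ : ι => Finset.range (m + 1) := by
    intro c hc
    rw [Fintype.mem_piFinset]
    intro i
    have := Finset.single_le_sum (f := c) (fun _ _ => Nat.zero_le _) (Finset.mem_univ i)
    rw [hS c hc] at this
    exact Finset.mem_range.2 (by omega)
  have hgeo : ∑ t ∈ Finset.range (m + 1), x * (1 - x) ^ t ≤ 1 := by
    have h := geom_sum_mul_neg (1 - x) (m + 1)
    rw [← Finset.mul_sum]
    have hp : 0 ≤ (1 - x) ^ (m + 1) := pow_nonneg h1' _
    have h2 : 1 - (1 - x) = x := by ring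
    rw [h2] at h
    linarith
  calc (S.card : ℝ) * (x ^ Fintype.card ι * (1 - x) ^ m)
      = ∑ c ∈ S, ∏ i, x * (1 - x) ^ c i := by
        rw [← nsmul_eq_mul, ← Finset.sum_const]
        refine Finset.sum_congr rfl fun c hc => ?_
        rw [Finset.prod_mul_distrib, Finset.prod_const, Finset.prod_pow_eq_pow_sum, hS c hc,
          Finset.card_univ]
    _ ≤ ∑ c ∈ Fintype.piFinset fun _ : ι => Finset.range (m + 1), ∏ i, x * (1 - x) ^ c i :=
        Finset.sum_le_sum_of_subset_of_nonneg hsub fun c _ _ =>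
          Finset.prod_nonneg fun i _ => mul_nonneg h0 (pow_nonneg h1' _)
    _ = ∏ _i : ι, ∑ t ∈ Finset.range (m + 1), x * (1 - x) ^ t := by
        rw [Finset.prod_univ_sum]
    _ ≤ 1 := Finset.prod_le_one
        (fun _ _ => Finset.sum_nonneg fun t _ => mul_nonneg h0 (pow_nonneg h1' _))
        fun _ _ => hgeo

/-- With `n = m + 1`, the number of vectors of `d` natural numbers with sum `m` is at most
`2 ^ d * (1 + n / d) ^ (2 * d)`. -/
lemma card_le {ι : Type*} [Fintype ι] [DecidableEq ι] [Nonempty ι] (m : ℕ) (S : Finset (ι → ℕ))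
    (hS : ∀ c ∈ S, ∑ i, c i = m) (d : ℕ) (hd : Fintype.card ι = d) :
    (S.card : ℝ) ≤ 2 ^ d * (((m + 1 : ℕ) : ℝ) / d + 1) ^ (2 * d) := by
  have hd0 : (0 : ℝ) < d := by rw [← hd]; exact_mod_cast Fintype.card_pos
  set a : ℝ := ((m + 1 : ℕ) : ℝ) / d with ha
  have ha0 : 0 ≤ a := by positivity
  have hx : 1 - 1 / (2 * (a + 1)) = (1 + 2 * a) / (2 * (a + 1)) := by field_simp; ring
  have hxpos : (0 : ℝ) < (1 + 2 * a) / (2 * (a + 1)) := by positivity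
  have hxle : (1 + 2 * a) / (2 * (a + 1)) ≤ 1 := by
    rw [div_le_one (by positivity)]; linarith
  have hmain := card_mul_le m S hS (1 / (2 * (a + 1))) (by positivity)
    (by rw [div_le_one (by positivity)]; linarith)
  rw [hx, hd] at hmain
  -- `(1 - x)⁻¹ = 1 + 1 / (1 + 2a) ≤ exp (1 / (1 + 2a))`
  have h1 : ((1 + 2 * a) / (2 * (a + 1)))⁻¹ ≤ Real.exp (1 / (1 + 2 * a)) := by
    refine le_trans (le_of_eq ?_) (Real.add_one_le_exp _)
    field_simp; ring
  have h2 : Real.exp (a / (1 + 2 * a)) ≤ a + 1 := by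
    have h := Real.add_one_le_exp (-(a / (1 + 2 * a)))
    rw [Real.exp_neg] at h
    have h3 : -(a / (1 + 2 * a)) + 1 = (1 + a) / (1 + 2 * a) := by field_simp; ring
    rw [h3] at h
    have h4 := (le_inv_comm₀ (by positivity) (Real.exp_pos _)).1 h
    refine h4.trans ?_
    rw [inv_div, div_le_iff₀ (by positivity)]
    nlinarith
  have h3 : (((1 + 2 * a) / (2 * (a + 1))) ^ (m + 1))⁻¹ ≤ (a + 1) ^ d := by
    rw [← inv_pow]
    calc ((1 + 2 * a) / (2 * (a + 1)))⁻¹ ^ (m + 1)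
        ≤ Real.exp (1 / (1 + 2 * a)) ^ (m + 1) := by gcongr
      _ = Real.exp (a / (1 + 2 * a)) ^ d := by
          rw [← Real.exp_nat_mul, ← Real.exp_nat_mul, ha]
          congr 1
          field_simp
      _ ≤ (a + 1) ^ d := by gcongr
  have h4 : (S.card : ℝ) * ((1 / (2 * (a + 1))) ^ d * ((1 + 2 * a) / (2 * (a + 1))) ^ (m + 1)) ≤ 1 := by
    refine le_trans ?_ hmain
    have := pow_le_pow_of_le_one hxpos.le hxle (Nat.le_succ m)
    gcongr
  rw [← le_div_iff₀ (by positivity), one_div, mul_inv] at h4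
  refine h4.trans ?_
  calc ((1 / (2 * (a + 1))) ^ d)⁻¹ * (((1 + 2 * a) / (2 * (a + 1))) ^ (m + 1))⁻¹
      ≤ ((1 / (2 * (a + 1))) ^ d)⁻¹ * (a + 1) ^ d := by gcongr
    _ = 2 ^ d * (a + 1) ^ (2 * d) := by
        rw [one_div, inv_pow, inv_inv, mul_pow, two_mul, pow_add]; ring

/-! ### The code and the mixture -/

/-- The Shannon code of `q` loses at most `log₂ C + 1` bits on every source dominated by `C * q`. -/
lemma exists_code {α : Type*} [Fintype α] (q : α → ℝ) (hq0 : ∀ x, 0 < q x) (hq1 : ∑ x, q x = 1)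
    (C : ℝ) (hC : 0 < C) :
    ∃ L : α → ℕ, ∑ x, (2 : ℝ) ^ (-(L x : ℤ)) ≤ 1 ∧
      ∀ p : α → ℝ, (∀ x, 0 ≤ p x) → ∑ x, p x = 1 → (∀ x, p x ≤ C * q x) →
        ∑ x, p x * (L x : ℝ) - ∑ x, p x * Real.logb 2 (1 / p x) ≤ Real.logb 2 C + 1 := by
  have hle : ∀ x, q x ≤ 1 := fun x => by
    rw [← hq1]
    exact Finset.single_le_sum (fun y _ => (hq0 y).le) (Finset.mem_univ x)
  refine ⟨fun x => ⌈-Real.logb 2 (q x)⌉₊, ?_, fun p hp0 hp1 hpq => ?_⟩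
  · rw [← hq1]
    refine Finset.sum_le_sum fun x _ => ?_
    have h := Nat.le_ceil (-Real.logb 2 (q x))
    rw [← Real.rpow_intCast]
    calc (2 : ℝ) ^ (((-(⌈-Real.logb 2 (q x)⌉₊ : ℤ) : ℤ)) : ℝ)
        ≤ (2 : ℝ) ^ (Real.logb 2 (q x)) := by
          apply Real.rpow_le_rpow_of_exponent_le one_le_two
          push_cast
          linarith
      _ = q x := Real.rpow_logb two_pos (by norm_num) (hq0 x)
  · rw [← Finset.sum_sub_distrib]
    calc ∑ x, (p x * (⌈-Real.logb 2 (q x)⌉₊ : ℝ) - p x * Real.logb 2 (1 / p x))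
        ≤ ∑ x, p x * (Real.logb 2 C + 1) := by
          refine Finset.sum_le_sum fun x _ => ?_
          rw [← mul_sub]
          rcases (hp0 x).eq_or_lt with h0 | h0
          · simp [← h0]
          refine mul_le_mul_of_nonneg_left ?_ h0.le
          have hceil := Nat.ceil_lt_add_one (a := -Real.logb 2 (q x))
            (neg_nonneg.2 (Real.logb_nonpos one_lt_two (hq0 x).le (hle x)))
          have hlog := Real.logb_le_logb_of_le one_lt_two h0 (hpq x)
          rw [Real.logb_mul hC.ne' (hq0 x).ne'] at hlog
          rw [one_div, Real.logb_inv]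
          linarith
      _ = Real.logb 2 C + 1 := by rw [← Finset.sum_mul, hp1, one_mul]

/-- The mixture over types, with total mass one, dominating all Markov laws up to the factor
`k * 2 ^ (k²) * (1 + n / k²) ^ (2 k²)`, where `n = m + 1`. -/
lemma exists_mixture (k m : ℕ) (hk : 0 < k) :
    ∃ q : (Fin (m + 1) → Fin k) → ℝ, (∀ x, 0 < q x) ∧ ∑ x, q x = 1 ∧
      ∀ (K : Matrix (Fin k) (Fin k) ℝ) (π : Fin k → ℝ), MemM2 K π → ∀ x,
        pathProb K π x ≤
          (k * (2 ^ k ^ 2 * (((m + 1 : ℕ) : ℝ) / (k : ℝ) ^ 2 + 1) ^ (2 * k ^ 2))) * q x := by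
  have hk' : (0 : ℝ) < k := by exact_mod_cast hk
  have : Nonempty (Fin k) := ⟨⟨0, hk⟩⟩
  choose M hM hpos hmax using exists_maximizer hk
  let S : Finset (Fin k × Fin k → ℕ) :=
    Finset.univ.image (pathType : (Fin (m + 1) → Fin k) → Fin k × Fin k → ℕ)
  have hxS : ∀ x : Fin (m + 1) → Fin k, pathType x ∈ S :=
    fun x => Finset.mem_image_of_mem _ (Finset.mem_univ x)
  have hcard0 : (0 : ℝ) < S.card := by
    exact_mod_cast Finset.card_pos.2 ⟨_, hxS fun _ => Classical.arbitrary _⟩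
  have hcard : (S.card : ℝ) ≤ 2 ^ k ^ 2 * (((m + 1 : ℕ) : ℝ) / (k : ℝ) ^ 2 + 1) ^ (2 * k ^ 2) := by
    have h := card_le m S (fun c hc => by
      obtain ⟨x, -, rfl⟩ := Finset.mem_image.1 hc
      exact sum_pathType x) (k ^ 2) (by simp [sq])
    push_cast at h ⊢
    exact h
  have hdom : ∀ x : Fin (m + 1) → Fin k,
      stepProd (M (pathType x)) x ≤ ∑ c ∈ S, stepProd (M c) x := fun x =>
    Finset.single_le_sum (f := fun c => stepProd (M c) x)
      (fun c _ => stepProd_nonneg (hM c) x) (hxS x)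
  have hpos' : ∀ x : Fin (m + 1) → Fin k, 0 < ∑ c ∈ S, stepProd (M c) x := fun x => by
    refine lt_of_lt_of_le ?_ (hdom x)
    rw [stepProd_eq]
    exact hpos _
  refine ⟨fun x => (k * S.card : ℝ)⁻¹ * ∑ c ∈ S, stepProd (M c) x, fun x => ?_, ?_, ?_⟩
  · exact mul_pos (by positivity) (hpos' x)
  · rw [← Finset.mul_sum, Finset.sum_comm]
    have h : ∀ c, ∑ x : Fin (m + 1) → Fin k, stepProd (M c) x = k := fun c => by
      have := sum_stepProd (hM c) m (fun _ => 1)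
      simpa using this
    rw [Finset.sum_congr rfl fun c _ => h c, Finset.sum_const, nsmul_eq_mul]
    field_simp
  · intro K π h x
    obtain ⟨hK, hπ, -⟩ := h
    have hπ1 : π (x 0) ≤ 1 := by
      rw [← hπ.2]
      exact Finset.single_le_sum (fun i _ => hπ.1 i) (Finset.mem_univ _)
    calc pathProb K π x = π (x 0) * stepProd K x := pathProb_eq K π x
      _ ≤ 1 * stepProd K x := mul_le_mul_of_nonneg_right hπ1 (stepProd_nonneg hK x)
      _ ≤ stepProd (M (pathType x)) x := by
          rw [one_mul, stepProd_eq, stepProd_eq]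
          exact hmax _ K hK
      _ ≤ ∑ c ∈ S, stepProd (M c) x := hdom x
      _ = (k * S.card : ℝ) * ((k * S.card : ℝ)⁻¹ * ∑ c ∈ S, stepProd (M c) x) := by
          field_simp
      _ ≤ _ := by
          have := hpos' x
          gcongr

/-- **Theorem 2 (upper bound on the minimax redundancy for Markov chains).**
For all `k ≥ 2` and `n ≥ 2` there is a Kraft length function whose redundancy is at most
`(2k²/n)·log₂(n/k² + 1) + k²/n + (log₂ k + 3)/n` for every stationary Markov chain in
`M₂(k)`; consequently `R_n(k)` is at most this bound. -/
theorem minimax_redundancy_upper_bound (k n : ℕ) (hk : 2 ≤ k) (hn : 2 ≤ n) :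
    (∃ L : (Fin n → Fin k) → ℕ, Kraft L ∧
      ∀ K : Matrix (Fin k) (Fin k) ℝ, ∀ π : Fin k → ℝ, MemM2 K π →
        redundancy L K π ≤
          2 * (k : ℝ) ^ 2 / n * Real.logb 2 ((n : ℝ) / (k : ℝ) ^ 2 + 1)
            + (k : ℝ) ^ 2 / n + (Real.logb 2 k + 3) / n) ∧
    minimaxRedundancyM2 k n ≤
      2 * (k : ℝ) ^ 2 / n * Real.logb 2 ((n : ℝ) / (k : ℝ) ^ 2 + 1)
        + (k : ℝ) ^ 2 / n + (Real.logb 2 k + 3) / n := by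
  obtain ⟨m, rfl⟩ : ∃ m, n = m + 1 := ⟨n - 1, by omega⟩
  have hk0 : 0 < k := by omega
  have hk' : (0 : ℝ) < k := by exact_mod_cast hk0
  have hn' : (0 : ℝ) < ((m + 1 : ℕ) : ℝ) := by positivity
  have ha1 : 1 ≤ ((m + 1 : ℕ) : ℝ) / (k : ℝ) ^ 2 + 1 := by
    have : 0 ≤ ((m + 1 : ℕ) : ℝ) / (k : ℝ) ^ 2 := by positivity
    linarith
  have hbound : 0 ≤ 2 * (k : ℝ) ^ 2 / (m + 1 : ℕ) *
      Real.logb 2 (((m + 1 : ℕ) : ℝ) / (k : ℝ) ^ 2 + 1)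
        + (k : ℝ) ^ 2 / (m + 1 : ℕ) + (Real.logb 2 k + 3) / (m + 1 : ℕ) := by
    have h1 := Real.logb_nonneg one_lt_two ha1
    have h2 : 0 ≤ Real.logb 2 (k : ℝ) :=
      Real.logb_nonneg one_lt_two (by exact_mod_cast hk0)
    positivity
  have hex : ∃ L : (Fin (m + 1) → Fin k) → ℕ, Kraft L ∧
      ∀ K : Matrix (Fin k) (Fin k) ℝ, ∀ π : Fin k → ℝ, MemM2 K π →
        redundancy L K π ≤
          2 * (k : ℝ) ^ 2 / (m + 1 : ℕ) * Real.logb 2 (((m + 1 : ℕ) : ℝ) / (k : ℝ) ^ 2 + 1)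
            + (k : ℝ) ^ 2 / (m + 1 : ℕ) + (Real.logb 2 k + 3) / (m + 1 : ℕ) := by
    obtain ⟨q, hq0, hq1, hq⟩ := exists_mixture k m hk0
    obtain ⟨L, hL, hred⟩ := exists_code q hq0 hq1 _
      (show 0 < (k : ℝ) * (2 ^ k ^ 2 * (((m + 1 : ℕ) : ℝ) / (k : ℝ) ^ 2 + 1) ^ (2 * k ^ 2)) by
        positivity)
    refine ⟨L, hL, fun K π h => ?_⟩
    have h1 := hred (fun x => pathProb K π x)
      (fun x => by
        rw [pathProb_eq]
        exact mul_nonneg (h.2.1.1 _) (stepProd_nonneg h.1 x))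
      (by
        simp only [pathProb_eq]
        rw [sum_stepProd h.1, h.2.1.2])
      (hq K π h)
    have hapos := lt_of_lt_of_le one_pos ha1
    rw [Real.logb_mul (by positivity) (by positivity), Real.logb_mul (by positivity) (by positivity),
      Real.logb_pow, Real.logb_pow, Real.logb_self_eq_one one_lt_two] at h1
    unfold redundancy entropy
    calc _ ≤ 1 / ((m + 1 : ℕ) : ℝ) * (2 * (k : ℝ) ^ 2 *
            Real.logb 2 (((m + 1 : ℕ) : ℝ) / (k : ℝ) ^ 2 + 1) + (k : ℝ) ^ 2
              + (Real.logb 2 k + 3)) := by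
          refine mul_le_mul_of_nonneg_left (h1.trans ?_) (by positivity)
          simp only [Nat.cast_mul, Nat.cast_pow, Nat.cast_ofNat]
          linarith
      _ = _ := by ring
  refine ⟨hex, ?_⟩
  obtain ⟨L, hL, hred⟩ := hex
  unfold minimaxRedundancyM2
  -- The infimum of a set of reals that is not bounded below is `0` by convention.
  by_cases hb : BddBelow {r : ℝ | ∃ L : (Fin (m + 1) → Fin k) → ℕ, Kraft L ∧
      r = sSup {s : ℝ | ∃ K π, MemM2 K π ∧ s = redundancy L K π}}
  · refine (csInf_le hb ⟨L, hL, rfl⟩).trans (Real.sSup_le ?_ hbound)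
    rintro s ⟨K, π, h, rfl⟩
    exact hred K π h
  · rw [Real.sInf_of_not_bddBelow hb]
    exact hbound

end Stmt1
end

section
/- Let k ≥ 2, n ≥ 2, and let q be a k×k row-stochastic matrix, interpreted as a conditional distribution q(b|a) = q_{ab} on [k]. Then there exists a length function L : [k]^n → ℕ satisfying Kraft's inequality Σ_{x^n ∈ [k]^n} 2^{−L(x^n)} ≤ 1 such that for every x^n ∈ [k]^n with q(x_{i+1}|x_i) > 0 for all 1 ≤ i ≤ n−1, L(x^n) ≤ ⌈log₂ k⌉ + Σ_{i=1}^{n−1} log₂( 1/q(x_{i+1}|x_i) ) + 2. In particular, taking q to be the empirical first-order conditional distribution q(b|a) = N(a,b)/N(a) of a sequence x^n, the resulting codelength satisfies L(x^n) ≤ log₂ k + (n−1)·H₁(x^n) + 3, where H₁(x^n) = Σ_{a,b} (N(a,b)/(n−1)) log₂( N(a)/N(a,b) ) is the first-order empirical entropy. -/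
/-!
The Markov measure `P(x) = (1/k) ∏ q(x_{i+1} | x_i)` is a probability distribution on `[k]^n`
(`sum_prod_transition`). Shannon lengths `⌈log₂ (1/P)⌉` are undefined where `P` vanishes, so `P` is
first mixed with the uniform distribution, `R = (P + k^{-n})/2`. The lengths `⌈log₂ (1/R)⌉` satisfy
Kraft's inequality on all of `[k]^n`, and since `R ≥ P/2` they exceed `log₂ (1/P)` by at most
`1` (mixing) plus `1` (rounding).

The second part applies this to the empirical conditional distribution of `x`: grouping the
positions of `x` by the pair of consecutive symbols found there turns the sum of `log₂ (1/q)` along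
`x` into `(n-1) H₁(x)` (`sum_positions_eq_sum_pairs`), and `⌈log₂ k⌉ ≤ log₂ k + 1` gives the
remaining bit.
-/

open scoped BigOperators

namespace Stmt13

/-- Kraft's inequality for a length function on `[k]^n`. -/
def Kraft {k n : ℕ} (L : (Fin n → Fin k) → ℕ) : Prop :=
  ∑ x : Fin n → Fin k, (2 : ℝ) ^ (-(L x : ℤ)) ≤ 1

/-- `N(a,b)`: the number of occurrences of the pair `(a,b)` among consecutive
entries of `x`. -/
def pairCount {k n : ℕ} (x : Fin n → Fin k) (a b : Fin k) : ℕ :=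
  ∑ r : Fin (n - 1),
    if x ⟨r.1, by have := r.2; omega⟩ = a ∧ x ⟨r.1 + 1, by have := r.2; omega⟩ = b
    then 1 else 0

/-- `N(a) = ∑_b N(a,b)`. -/
def count {k n : ℕ} (x : Fin n → Fin k) (a : Fin k) : ℕ :=
  ∑ b, pairCount x a b

/-- The first-order empirical entropy
`H₁(x^n) = ∑_{a,b} (N(a,b)/(n−1)) log₂(N(a)/N(a,b))` (terms with `N(a,b) = 0`
vanish). -/
noncomputable def empEntropy1 {k n : ℕ} (x : Fin n → Fin k) : ℝ :=
  ∑ a : Fin k, ∑ b : Fin k,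
    ((pairCount x a b : ℝ) / ((n : ℝ) - 1)) *
      Real.logb 2 ((count x a : ℝ) / (pairCount x a b : ℝ))

/-- The transition weights of all paths with `m` steps sum to the number of initial states. -/
lemma sum_prod_transition {k : ℕ} (q : Matrix (Fin k) (Fin k) ℝ) (hq : ∀ a, ∑ b, q a b = 1)
    (m : ℕ) :
    ∑ x : Fin (m + 1) → Fin k, ∏ i : Fin m, q (x i.castSucc) (x i.succ) = k := by
  induction m with
  | zero => simp
  | succ m ih =>
    rw [← (Fin.snocEquiv (fun _ : Fin (m + 2) => Fin k)).sum_comp, Fintype.sum_prod_type_right]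
    rw [← ih]
    refine Finset.sum_congr rfl fun y _ => ?_
    have h : ∀ b : Fin k, ∏ i : Fin (m + 1),
        q ((Fin.snocEquiv (fun _ : Fin (m + 2) => Fin k)) (b, y) i.castSucc)
          ((Fin.snocEquiv (fun _ : Fin (m + 2) => Fin k)) (b, y) i.succ)
        = (∏ i : Fin m, q (y i.castSucc) (y i.succ)) * q (y (Fin.last m)) b := by
      intro b
      rw [Fin.prod_univ_castSucc]
      simp only [Fin.snocEquiv_apply, Fin.snoc_castSucc, Fin.succ_last, Fin.snoc_last,
        Fin.succ_castSucc]
    rw [Finset.sum_congr rfl fun b _ => h b, ← Finset.mul_sum, hq, mul_one]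

/-- Shannon code for a subprobability distribution, mixed with the uniform distribution so that
points of mass zero also receive a finite length. -/
lemma exists_shannon_code {k n : ℕ} (hk : 2 ≤ k) (p : (Fin n → Fin k) → ℝ) (hp : ∀ x, 0 ≤ p x)
    (hsum : ∑ x, p x ≤ 1) :
    ∃ L : (Fin n → Fin k) → ℕ, Kraft L ∧
      ∀ x, 0 < p x → (L x : ℝ) ≤ Real.logb 2 (1 / p x) + 2 := by
  have hk0 : (0 : ℝ) < k := by exact_mod_cast (by omega : 0 < k)
  have hu : (0 : ℝ) < 1 / (k : ℝ) ^ n := by positivity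
  set r : (Fin n → Fin k) → ℝ := fun x => (p x + 1 / (k : ℝ) ^ n) / 2 with hr
  have hr0 : ∀ x, 0 < r x := fun x => by have := hp x; simp only [hr]; linarith
  refine ⟨fun x => ⌈Real.logb 2 (1 / r x)⌉₊, ?_, ?_⟩
  · have hrsum : ∑ x, r x ≤ 1 := by
      simp only [hr]
      rw [← Finset.sum_div, Finset.sum_add_distrib]
      have : ∑ _x : Fin n → Fin k, 1 / (k : ℝ) ^ n = 1 := by
        simp [hk0.ne']
      rw [this]; linarith
    refine le_trans (Finset.sum_le_sum fun x _ => ?_) hrsum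
    have h1 := Nat.le_ceil (Real.logb 2 (1 / r x))
    rw [one_div, Real.logb_inv] at h1
    have h2 : (2 : ℝ) ^ (-(⌈Real.logb 2 (1 / r x)⌉₊ : ℝ)) ≤ r x := by
      rw [← Real.le_logb_iff_rpow_le one_lt_two (hr0 x), one_div, Real.logb_inv]
      linarith
    rw [← Real.rpow_intCast]
    push_cast
    exact h2
  · intro x hx
    have hrle : r x ≤ 1 := by
      have h1 : p x ≤ 1 :=
        le_trans (Finset.single_le_sum (fun y _ => hp y) (Finset.mem_univ x)) hsum
      have h2 : 1 / (k : ℝ) ^ n ≤ 1 := by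
        rw [div_le_one (by positivity)]
        exact one_le_pow₀ (by exact_mod_cast (by omega : 1 ≤ k))
      simp only [hr]; linarith
    -- Needed since the natural-number ceiling truncates negative values.
    have hnn : 0 ≤ Real.logb 2 (1 / r x) :=
      Real.logb_nonneg one_lt_two ((one_le_div (hr0 x)).2 hrle)
    have h1 := (Nat.ceil_lt_add_one hnn).le
    have h2 : Real.logb 2 (1 / r x) ≤ Real.logb 2 (1 / p x) + 1 := by
      have : Real.logb 2 (1 / p x) + 1 = Real.logb 2 (1 / p x * 2) := by
        rw [Real.logb_mul (by positivity) two_ne_zero, Real.logb_self_eq_one one_lt_two]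
      rw [this]
      refine Real.logb_le_logb_of_le one_lt_two (by have := hr0 x; positivity) ?_
      rw [div_mul_eq_mul_div, one_mul, div_le_div_iff₀ (hr0 x) hx]
      simp only [hr]; linarith
    linarith

/-- The first half of the theorem, for words of length `m + 1`. -/
lemma exists_markov_code {k : ℕ} (hk : 2 ≤ k) (m : ℕ) (q : Matrix (Fin k) (Fin k) ℝ)
    (hq0 : ∀ a b, 0 ≤ q a b) (hq : ∀ a, ∑ b, q a b = 1) :
    ∃ L : (Fin (m + 1) → Fin k) → ℕ, Kraft L ∧
      ∀ x : Fin (m + 1) → Fin k, (∀ i : Fin m, 0 < q (x i.castSucc) (x i.succ)) →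
        (L x : ℝ) ≤ (⌈Real.logb 2 (k : ℝ)⌉ : ℝ) +
          (∑ i : Fin m, Real.logb 2 (1 / q (x i.castSucc) (x i.succ))) + 2 := by
  have hk0 : (0 : ℝ) < k := by exact_mod_cast (by omega : 0 < k)
  obtain ⟨L, hL, hLx⟩ := exists_shannon_code hk
    (fun x : Fin (m + 1) → Fin k => (∏ i : Fin m, q (x i.castSucc) (x i.succ)) / k)
    (fun x => div_nonneg (Finset.prod_nonneg fun i _ => hq0 _ _) hk0.le)
    (by rw [← Finset.sum_div, sum_prod_transition q hq, div_self hk0.ne'])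
  refine ⟨L, hL, fun x hx => ?_⟩
  have hprod : 0 < ∏ i : Fin m, q (x i.castSucc) (x i.succ) :=
    Finset.prod_pos fun i _ => hx i
  have h := hLx x (div_pos hprod hk0)
  have hlog : Real.logb 2 (1 / ((∏ i : Fin m, q (x i.castSucc) (x i.succ)) / k))
      = Real.logb 2 k + ∑ i : Fin m, Real.logb 2 (1 / q (x i.castSucc) (x i.succ)) := by
    rw [one_div_div, Real.logb_div hk0.ne' hprod.ne',
      Real.logb_prod _ _ fun i _ => (hx i).ne', sub_eq_add_neg, ← Finset.sum_neg_distrib]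
    simp only [one_div, Real.logb_inv]
  have hceil := Int.le_ceil (Real.logb 2 (k : ℝ))
  linarith

/-- Summing a function of consecutive symbols along `x` amounts to weighting it by the pair
counts of `x`. -/
lemma sum_positions_eq_sum_pairs {k m : ℕ} (x : Fin (m + 1) → Fin k) (f : Fin k → Fin k → ℝ) :
    ∑ i : Fin m, f (x i.castSucc) (x i.succ) = ∑ a, ∑ b, (pairCount x a b : ℝ) * f a b := by
  have h : ∀ a b, (pairCount x a b : ℝ) * f a b
      = ∑ i : Fin m, if x i.castSucc = a then (if x i.succ = b then f a b else 0) else 0 := by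
    intro a b
    unfold pairCount
    push_cast
    rw [Finset.sum_mul]
    refine Finset.sum_congr rfl fun i _ => ?_
    change (if x i.castSucc = a ∧ x i.succ = b then (1 : ℝ) else 0) * f a b = _
    rw [ite_and]
    split_ifs <;> simp
  simp only [h]
  rw [Finset.sum_congr rfl fun a _ => Finset.sum_comm, Finset.sum_comm]
  refine Finset.sum_congr rfl fun i _ => ?_
  simp

lemma pairCount_pos {k m : ℕ} (x : Fin (m + 1) → Fin k) (i : Fin m) :
    0 < pairCount x (x i.castSucc) (x i.succ) := by
  unfold pairCount
  refine Finset.sum_pos' (fun _ _ => Nat.zero_le _) ⟨i, Finset.mem_univ _, ?_⟩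
  change 0 < if x i.castSucc = x i.castSucc ∧ x i.succ = x i.succ then 1 else 0
  simp

lemma pairCount_le_count {k n : ℕ} (x : Fin n → Fin k) (a b : Fin k) :
    pairCount x a b ≤ count x a :=
  Finset.single_le_sum (f := fun b => pairCount x a b) (fun _ _ => Nat.zero_le _)
    (Finset.mem_univ b)

/-- The empirical conditional distribution `N(a,b)/N(a)` of `x`; rows of symbols with `N(a) = 0`
are completed by the uniform distribution so that the matrix is stochastic. -/
noncomputable def empCond {k n : ℕ} (x : Fin n → Fin k) : Matrix (Fin k) (Fin k) ℝ :=
  fun a b => if count x a = 0 then 1 / (k : ℝ) else (pairCount x a b : ℝ) / (count x a : ℝ)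

lemma empCond_nonneg {k n : ℕ} (x : Fin n → Fin k) (a b : Fin k) : 0 ≤ empCond x a b := by
  unfold empCond
  split_ifs <;> positivity

lemma sum_empCond {k n : ℕ} (hk : 2 ≤ k) (x : Fin n → Fin k) (a : Fin k) :
    ∑ b, empCond x a b = 1 := by
  have hk0 : (k : ℝ) ≠ 0 := by exact_mod_cast (by omega : k ≠ 0)
  unfold empCond
  split_ifs with h
  · simp [hk0]
  · have h' : (count x a : ℝ) ≠ 0 := by exact_mod_cast h
    rw [← Finset.sum_div, div_eq_one_iff_eq h']
    unfold count
    push_cast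
    rfl

lemma empCond_of_pos {k n : ℕ} (x : Fin n → Fin k) {a b : Fin k} (h : 0 < pairCount x a b) :
    empCond x a b = (pairCount x a b : ℝ) / (count x a : ℝ) :=
  if_neg (h.trans_le (pairCount_le_count x a b)).ne'

lemma sum_logb_empCond {k m : ℕ} (hm : 1 ≤ m) (x : Fin (m + 1) → Fin k) :
    ∑ i : Fin m, Real.logb 2 (1 / empCond x (x i.castSucc) (x i.succ))
      = (((m + 1 : ℕ) : ℝ) - 1) * empEntropy1 x := by
  have hm0 : ((m + 1 : ℕ) : ℝ) - 1 ≠ 0 := by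
    push_cast
    rw [add_sub_cancel_right]
    exact_mod_cast (by omega : m ≠ 0)
  rw [sum_positions_eq_sum_pairs x fun a b => Real.logb 2 (1 / empCond x a b)]
  unfold empEntropy1
  rw [Finset.mul_sum]
  refine Finset.sum_congr rfl fun a _ => ?_
  rw [Finset.mul_sum]
  refine Finset.sum_congr rfl fun b _ => ?_
  rcases Nat.eq_zero_or_pos (pairCount x a b) with h | h
  · simp [h]
  · rw [empCond_of_pos x h, one_div_div, ← mul_assoc, mul_div_cancel₀ _ hm0]

/-- **First-order arithmetic coding.**  (i) For every row-stochastic conditional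
distribution `q` on `[k]` there is a Kraft length function `L` with
`L(x^n) ≤ ⌈log₂ k⌉ + ∑_{i<n} log₂(1/q(x_{i+1}|x_i)) + 2` whenever all the transition
probabilities along `x^n` are positive.  (ii) In particular (taking `q` to be the
empirical first-order conditional distribution of `x^n`), for every `x^n` there is a
Kraft length function with `L(x^n) ≤ log₂ k + (n−1) H₁(x^n) + 3`. -/
theorem arithmetic_coding (k n : ℕ) (hk : 2 ≤ k) (hn : 2 ≤ n) :
    (∀ q : Matrix (Fin k) (Fin k) ℝ, (∀ a b, 0 ≤ q a b) → (∀ a, ∑ b, q a b = 1) →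
      ∃ L : (Fin n → Fin k) → ℕ, Kraft L ∧
        ∀ x : Fin n → Fin k,
          (∀ i : Fin (n - 1),
            0 < q (x ⟨i.1, by have := i.2; omega⟩) (x ⟨i.1 + 1, by have := i.2; omega⟩)) →
          (L x : ℝ) ≤ (⌈Real.logb 2 (k : ℝ)⌉ : ℝ) +
            (∑ i : Fin (n - 1), Real.logb 2
              (1 / q (x ⟨i.1, by have := i.2; omega⟩) (x ⟨i.1 + 1, by have := i.2; omega⟩)))
            + 2) ∧
    (∀ x : Fin n → Fin k, ∃ L : (Fin n → Fin k) → ℕ, Kraft L ∧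
      (L x : ℝ) ≤ Real.logb 2 (k : ℝ) + ((n : ℝ) - 1) * empEntropy1 x + 3) := by
  obtain ⟨m, rfl⟩ : ∃ m, n = m + 1 := ⟨n - 1, by omega⟩
  refine ⟨fun q hq0 hq => exists_markov_code hk m q hq0 hq, fun x => ?_⟩
  obtain ⟨L, hL, hLx⟩ := exists_markov_code hk m (empCond x) (empCond_nonneg x) (sum_empCond hk x)
  refine ⟨L, hL, ?_⟩
  have h := hLx x fun i => by
    have hpos := pairCount_pos x i
    have hpos' := hpos.trans_le (pairCount_le_count x _ _)
    rw [empCond_of_pos x hpos]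
    positivity
  rw [sum_logb_empCond (by omega) x] at h
  have hceil := (Int.ceil_lt_add_one (Real.logb 2 (k : ℝ))).le
  linarith

end Stmt13
end

section
/- For all k ≥ 2 and n ≥ 2 there exists a single length function L̂ : [k]^n → ℕ satisfying Kraft's inequality Σ_{x^n ∈ [k]^n} 2^{−L̂(x^n)} ≤ 1 such that for every sequence x^n ∈ [k]^n, L̂(x^n) ≤ 2k²·log₂(n/k² + 1) + k² + log₂ k + (n−1)·H₁(x^n) + 3, where H₁(x^n) = Σ_{a,b ∈ [k]} (N(a,b)/(n−1))·log₂( N(a)/N(a,b) ) is the first-order empirical entropy of x^n. -/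
/-!
The code is a two-part code described through a subprobability `codeProb` on sequences, with
`L̂(x) = ⌈-log₂ codeProb x⌉`; Kraft's inequality then follows from `∑ x, codeProb x ≤ 1`.

For a count matrix `C`, `component C` is the product of the integer weights
`w(C a b) = 1 / ((C a b + 1)(C a b + 2))` with the law of the Markov chain whose start is uniform
and whose transition probabilities are the normalised rows of `C`; and
`codeProb x = component N x` with `N` the pair counts of `x`. Summing over all matrices instead
of `N` only increases the total, and the enlarged sum is at most one because the Markov laws and
`w` are subprobabilities (`sum_codeProb_le`).

Taking logarithms (`neg_logb_codeProb`), the uniform start costs `log₂ k`, the chain costs exactly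
`(n - 1) H₁(x)`, and the matrix costs at most `∑ (2 log₂ (N(a,b) + 1) + 1)`. Since the counts
sum to `n - 1`, concavity of the logarithm bounds the latter by `2k² log₂ (n/k² + 1) + k²`
(`matrix_cost_le`). Rounding up adds at most one bit.
-/

open scoped BigOperators

namespace Stmt14

/-- Kraft's inequality for a length function on `[k]^n`. -/
def Kraft {k n : ℕ} (L : (Fin n → Fin k) → ℕ) : Prop :=
  ∑ x : Fin n → Fin k, (2 : ℝ) ^ (-(L x : ℤ)) ≤ 1

/-- `N(a,b)`: the number of occurrences of the pair `(a,b)` among consecutive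
entries of `x`. -/
def pairCount {k n : ℕ} (x : Fin n → Fin k) (a b : Fin k) : ℕ :=
  ∑ r : Fin (n - 1),
    if x ⟨r.1, by have := r.2; omega⟩ = a ∧ x ⟨r.1 + 1, by have := r.2; omega⟩ = b
    then 1 else 0

/-- `N(a) = ∑_b N(a,b)`. -/
def count {k n : ℕ} (x : Fin n → Fin k) (a : Fin k) : ℕ :=
  ∑ b, pairCount x a b

/-- The first-order empirical entropy
`H₁(x^n) = ∑_{a,b} (N(a,b)/(n−1)) log₂(N(a)/N(a,b))` (terms with `N(a,b) = 0`
vanish). -/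
noncomputable def empEntropy1 {k n : ℕ} (x : Fin n → Fin k) : ℝ :=
  ∑ a : Fin k, ∑ b : Fin k,
    ((pairCount x a b : ℝ) / ((n : ℝ) - 1)) *
      Real.logb 2 ((count x a : ℝ) / (pairCount x a b : ℝ))

/-- The integer weight `w(m) = 1 / ((m+1)(m+2))`, a telescoping subprobability on `ℕ`
whose ideal code length `-log₂ w(m)` is at most `2 log₂ (m+1) + 1`. -/
noncomputable def intWeight (m : ℕ) : ℝ := 1 / (((m : ℝ) + 1) * ((m : ℝ) + 2))

lemma intWeight_pos (m : ℕ) : 0 < intWeight m := by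
  unfold intWeight; positivity

lemma sum_intWeight (n : ℕ) : ∑ m ∈ Finset.range n, intWeight m = 1 - 1 / ((n : ℝ) + 1) := by
  induction n with
  | zero => simp
  | succ n ih =>
    rw [Finset.sum_range_succ, ih]
    unfold intWeight
    push_cast
    field_simp
    ring

lemma sum_fin_intWeight_le (n : ℕ) : ∑ m : Fin n, intWeight m ≤ 1 := by
  rw [Fin.sum_univ_eq_sum_range (fun m => intWeight m), sum_intWeight]
  have : 0 ≤ 1 / ((n : ℝ) + 1) := by positivity
  linarith

lemma neg_logb_intWeight_le (m : ℕ) :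
    -Real.logb 2 (intWeight m) ≤ 2 * Real.logb 2 ((m : ℝ) + 1) + 1 := by
  have h1 : (0 : ℝ) < (m : ℝ) + 1 := by positivity
  have h2 : (0 : ℝ) < (m : ℝ) + 2 := by positivity
  unfold intWeight
  rw [one_div, Real.logb_inv, neg_neg, Real.logb_mul h1.ne' h2.ne']
  have h3 : Real.logb 2 ((m : ℝ) + 2) ≤ Real.logb 2 (2 * ((m : ℝ) + 1)) :=
    Real.logb_le_logb_of_le (by norm_num) h2 (by linarith [(Nat.cast_nonneg m : (0 : ℝ) ≤ m)])
  rw [Real.logb_mul (by norm_num) h1.ne', Real.logb_self_eq_one (by norm_num)] at h3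
  linarith

/-- Jensen's inequality for `log₂` with uniform weights. -/
lemma sum_logb_le {ι : Type*} [Fintype ι] [Nonempty ι] (f : ι → ℝ) (hf : ∀ i, 0 < f i) :
    ∑ i, Real.logb 2 (f i) ≤
      Fintype.card ι * Real.logb 2 ((∑ i, f i) / Fintype.card ι) := by
  have hc : (0 : ℝ) < Fintype.card ι := by exact_mod_cast Fintype.card_pos
  have h := strictConcaveOn_log_Ioi.concaveOn.le_map_sum (t := Finset.univ)
    (w := fun _ : ι => (Fintype.card ι : ℝ)⁻¹) (p := f) (fun _ _ => by positivity)
    (by simp [hc.ne']) (fun i _ => hf i)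
  simp only [smul_eq_mul, ← Finset.mul_sum] at h
  rw [inv_mul_le_iff₀ hc] at h
  have hl : (0 : ℝ) < Real.log 2 := Real.log_pos (by norm_num)
  simp only [Real.logb, ← Finset.sum_div]
  rw [← mul_div_assoc, div_eq_inv_mul (∑ i, f i)]
  gcongr

/-- A substochastic transition kernel, summed over all paths from all starting states,
has total mass at most the number of states. -/
lemma sum_path_le {k : ℕ} (W : Fin k → Fin k → ℝ) (hW : ∀ a b, 0 ≤ W a b)
    (hrow : ∀ a, ∑ b, W a b ≤ 1) (m : ℕ) :
    ∑ x : Fin (m + 1) → Fin k, ∏ r : Fin m, W (x r.castSucc) (x r.succ) ≤ k := by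
  induction m with
  | zero => simp
  | succ m ih =>
    refine le_trans ?_ ih
    rw [← (Fin.snocEquiv (fun _ : Fin (m + 2) => Fin k)).sum_comp, Fintype.sum_prod_type_right]
    refine Finset.sum_le_sum fun y _ => ?_
    have key : ∀ b : Fin k, (∏ r : Fin (m + 1),
        W ((Fin.snocEquiv (fun _ : Fin (m + 2) => Fin k)) (b, y) r.castSucc)
          ((Fin.snocEquiv (fun _ : Fin (m + 2) => Fin k)) (b, y) r.succ))
        = (∏ r : Fin m, W (y r.castSucc) (y r.succ)) * W (y (Fin.last m)) b := by
      intro b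
      rw [Fin.prod_univ_castSucc]
      simp only [Fin.snocEquiv_apply, Fin.succ_castSucc, Fin.succ_last, Fin.snoc_castSucc,
        Fin.snoc_last]
    simp only [key, ← Finset.mul_sum]
    exact mul_le_of_le_one_right (Finset.prod_nonneg fun _ _ => hW _ _) (hrow _)

/-- Summing a function over consecutive pairs groups into a sum weighted by pair counts. -/
lemma sum_pairs {k m : ℕ} (x : Fin (m + 1) → Fin k) (g : Fin k → Fin k → ℝ) :
    ∑ r : Fin m, g (x r.castSucc) (x r.succ) = ∑ a, ∑ b, (pairCount x a b : ℝ) * g a b := by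
  have h : ∀ a b, (pairCount x a b : ℝ) =
      ∑ r : Fin m, if x r.castSucc = a ∧ x r.succ = b then (1 : ℝ) else 0 := by
    intro a b
    unfold pairCount
    push_cast
    rfl
  simp only [h, Finset.sum_mul]
  rw [Finset.sum_congr rfl (fun a _ => Finset.sum_comm), Finset.sum_comm]
  refine Finset.sum_congr rfl fun r _ => ?_
  simp [ite_and]

lemma sum_pairCount {k m : ℕ} (x : Fin (m + 1) → Fin k) :
    ∑ a, ∑ b, (pairCount x a b : ℝ) = m := by
  simpa using (sum_pairs x (fun _ _ => 1)).symm

lemma pairCount_pos {k m : ℕ} (x : Fin (m + 1) → Fin k) (r : Fin m) :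
    0 < pairCount x (x r.castSucc) (x r.succ) := by
  unfold pairCount
  refine Finset.sum_pos' (fun _ _ => Nat.zero_le _) ⟨r, Finset.mem_univ _, ?_⟩
  rw [if_pos ⟨rfl, rfl⟩]
  exact one_pos

lemma pairCount_le {k m : ℕ} (x : Fin (m + 1) → Fin k) (a b : Fin k) :
    pairCount x a b ≤ m := by
  unfold pairCount
  refine (Finset.sum_le_card_nsmul _ _ 1 fun r _ => ?_).trans (by simp)
  split_ifs <;> simp

lemma pairCount_le_count {k n : ℕ} (x : Fin n → Fin k) (a b : Fin k) :
    pairCount x a b ≤ count x a :=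
  Finset.single_le_sum (f := fun b => pairCount x a b) (fun _ _ => Nat.zero_le _)
    (Finset.mem_univ b)

/-- The mixture component indexed by a count matrix `C`: the prior weight of `C` times the
probability of the path `x` under a uniform start and the transition matrix obtained by
normalising the rows of `C` (zero rows stay zero, since `0 / 0 = 0`). -/
noncomputable def component {k m : ℕ} (C : Fin k → Fin k → ℕ) (x : Fin (m + 1) → Fin k) : ℝ :=
  (1 / (k : ℝ)) * (∏ p : Fin k × Fin k, intWeight (C p.1 p.2)) *
    ∏ r : Fin m, ((C (x r.castSucc) (x r.succ) : ℝ) / ∑ b, (C (x r.castSucc) b : ℝ))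

lemma component_nonneg {k m : ℕ} (C : Fin k → Fin k → ℕ) (x : Fin (m + 1) → Fin k) :
    0 ≤ component C x := by
  have : 0 ≤ ∏ p : Fin k × Fin k, intWeight (C p.1 p.2) :=
    Finset.prod_nonneg fun _ _ => (intWeight_pos _).le
  unfold component
  positivity

lemma sum_component_le {k m : ℕ} (C : Fin k → Fin k → ℕ) :
    ∑ x : Fin (m + 1) → Fin k, component C x ≤ ∏ p : Fin k × Fin k, intWeight (C p.1 p.2) := by
  have hw : 0 ≤ ∏ p : Fin k × Fin k, intWeight (C p.1 p.2) :=
    Finset.prod_nonneg fun _ _ => (intWeight_pos _).le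
  have h := sum_path_le (fun a b => (C a b : ℝ) / ∑ b, (C a b : ℝ))
    (fun a b => by positivity)
    (fun a => by rw [← Finset.sum_div]; exact div_self_le_one _) m
  unfold component
  rw [← Finset.mul_sum]
  calc _ ≤ (1 / (k : ℝ)) * (∏ p : Fin k × Fin k, intWeight (C p.1 p.2)) * k := by gcongr
    _ = (∏ p : Fin k × Fin k, intWeight (C p.1 p.2)) * ((k : ℝ) / k) := by ring
    _ ≤ _ := mul_le_of_le_one_right hw (div_self_le_one _)

/-- The two-part subprobability: each `x` is charged to the component of its own count matrix. -/
noncomputable def codeProb {k m : ℕ} (x : Fin (m + 1) → Fin k) : ℝ :=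
  component (pairCount x) x

/-- Enlarging the single component used by `x` to the sum over all count matrices with entries
at most `m` decouples the matrix from `x`, after which both sums are at most one. -/
lemma sum_codeProb_le (k m : ℕ) : ∑ x : Fin (m + 1) → Fin k, codeProb x ≤ 1 := by
  calc ∑ x : Fin (m + 1) → Fin k, codeProb x
      ≤ ∑ x : Fin (m + 1) → Fin k, ∑ D : Fin k × Fin k → Fin (m + 1),
          component (fun a b => (D (a, b) : ℕ)) x := by
        refine Finset.sum_le_sum fun x _ => ?_
        have h := Finset.single_le_sum
          (f := fun D : Fin k × Fin k → Fin (m + 1) => component (fun a b => (D (a, b) : ℕ)) x)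
          (fun D _ => component_nonneg _ x)
          (Finset.mem_univ
            (fun p => ⟨pairCount x p.1 p.2, Nat.lt_succ_of_le (pairCount_le x p.1 p.2)⟩))
        unfold codeProb
        exact h
    _ = ∑ D : Fin k × Fin k → Fin (m + 1), ∑ x : Fin (m + 1) → Fin k,
          component (fun a b => (D (a, b) : ℕ)) x := Finset.sum_comm
    _ ≤ ∑ D : Fin k × Fin k → Fin (m + 1), ∏ p : Fin k × Fin k, intWeight (D p) :=
        Finset.sum_le_sum fun D _ => sum_component_le fun a b => (D (a, b) : ℕ)
    _ = ∏ _p : Fin k × Fin k, ∑ j : Fin (m + 1), intWeight j := by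
        rw [Finset.prod_univ_sum, Fintype.piFinset_univ]
    _ ≤ 1 := Finset.prod_le_one
        (fun _ _ => Finset.sum_nonneg fun _ _ => (intWeight_pos _).le)
        (fun _ _ => sum_fin_intWeight_le _)

lemma codeProb_pos {k m : ℕ} (hk : 0 < k) (x : Fin (m + 1) → Fin k) : 0 < codeProb x := by
  have hk' : (0 : ℝ) < k := by exact_mod_cast hk
  refine mul_pos (mul_pos (by positivity) (Finset.prod_pos fun _ _ => intWeight_pos _))
    (Finset.prod_pos fun r _ => ?_)
  have h := pairCount_pos x r
  have h' := h.trans_le (pairCount_le_count x _ _)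
  have e : (∑ b, (pairCount x (x r.castSucc) b : ℝ)) = (count x (x r.castSucc) : ℝ) := by
    simp [count]
  rw [e]
  exact div_pos (by exact_mod_cast h) (by exact_mod_cast h')

lemma codeProb_le_one {k m : ℕ} (x : Fin (m + 1) → Fin k) : codeProb x ≤ 1 :=
  (Finset.single_le_sum (f := fun x : Fin (m + 1) → Fin k => codeProb x)
    (fun y _ => component_nonneg _ y) (Finset.mem_univ x)).trans (sum_codeProb_le k m)

lemma neg_logb_codeProb {k m : ℕ} (hk : 0 < k) (hm : 0 < m) (x : Fin (m + 1) → Fin k) :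
    -Real.logb 2 (codeProb x) = Real.logb 2 k
      + (∑ p : Fin k × Fin k, -Real.logb 2 (intWeight (pairCount x p.1 p.2)))
      + (m : ℝ) * empEntropy1 x := by
  have hk' : (k : ℝ) ≠ 0 := by exact_mod_cast hk.ne'
  have hm' : (m : ℝ) ≠ 0 := by exact_mod_cast hm.ne'
  have hpos := codeProb_pos hk x
  have hw : ∏ p : Fin k × Fin k, intWeight (pairCount x p.1 p.2) ≠ 0 :=
    (Finset.prod_pos fun _ _ => intWeight_pos _).ne'
  have e : ∀ a, (∑ b, (pairCount x a b : ℝ)) = (count x a : ℝ) := by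
    intro a; simp [count]
  have hent : (m : ℝ) * empEntropy1 x = ∑ r : Fin m,
      -Real.logb 2 ((pairCount x (x r.castSucc) (x r.succ) : ℝ) / count x (x r.castSucc)) := by
    rw [sum_pairs x (fun a b => -Real.logb 2 ((pairCount x a b : ℝ) / count x a)), empEntropy1,
      Finset.mul_sum]
    refine Finset.sum_congr rfl fun a _ => ?_
    rw [Finset.mul_sum]
    refine Finset.sum_congr rfl fun b _ => ?_
    rw [← Real.logb_inv, inv_div]
    push_cast
    rw [add_sub_cancel_right]
    field_simp
  unfold codeProb component at hpos ⊢
  simp only [e] at hpos ⊢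
  have hp : ∏ r : Fin m, ((pairCount x (x r.castSucc) (x r.succ) : ℝ) / count x (x r.castSucc))
      ≠ 0 := right_ne_zero_of_mul hpos.ne'
  rw [Real.logb_mul (left_ne_zero_of_mul hpos.ne') hp,
    Real.logb_mul (one_div_ne_zero hk') hw, one_div, Real.logb_inv,
    Real.logb_prod _ _ (fun p _ => (intWeight_pos _).ne'),
    Real.logb_prod _ _ (fun r hr => Finset.prod_ne_zero_iff.mp hp r hr), hent]
  simp only [Finset.sum_neg_distrib]
  ring

/-- Cost of storing the count matrix: the `k²` entries sum to `m`, so by Jensen the total length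
is largest when they are all equal. -/
lemma matrix_cost_le {k m : ℕ} (hk : 0 < k) (x : Fin (m + 1) → Fin k) :
    ∑ p : Fin k × Fin k, -Real.logb 2 (intWeight (pairCount x p.1 p.2)) ≤
      2 * (k : ℝ) ^ 2 * Real.logb 2 (((m + 1 : ℕ) : ℝ) / (k : ℝ) ^ 2 + 1) + (k : ℝ) ^ 2 := by
  have hk' : (0 : ℝ) < k := by exact_mod_cast hk
  have : Nonempty (Fin k) := ⟨⟨0, hk⟩⟩
  have hj := sum_logb_le (fun p : Fin k × Fin k => (pairCount x p.1 p.2 : ℝ) + 1)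
    (fun p => by positivity)
  have hc : ((Fintype.card (Fin k × Fin k) : ℕ) : ℝ) = (k : ℝ) ^ 2 := by
    simp [sq]
  have hs : ∑ p : Fin k × Fin k, ((pairCount x p.1 p.2 : ℝ) + 1) = m + (k : ℝ) ^ 2 := by
    rw [Finset.sum_add_distrib, Fintype.sum_prod_type, sum_pairCount]
    simp [sq]
  rw [hc, hs] at hj
  have hmono : Real.logb 2 ((m + (k : ℝ) ^ 2) / (k : ℝ) ^ 2) ≤
      Real.logb 2 (((m + 1 : ℕ) : ℝ) / (k : ℝ) ^ 2 + 1) := by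
    refine Real.logb_le_logb_of_le (by norm_num) (by positivity) ?_
    rw [add_div, div_self (by positivity)]
    gcongr
    exact Nat.le_succ m
  calc _ ≤ ∑ p : Fin k × Fin k, (2 * Real.logb 2 ((pairCount x p.1 p.2 : ℝ) + 1) + 1) :=
        Finset.sum_le_sum fun p _ => neg_logb_intWeight_le _
    _ = 2 * ∑ p : Fin k × Fin k, Real.logb 2 ((pairCount x p.1 p.2 : ℝ) + 1) + (k : ℝ) ^ 2 := by
        rw [Finset.sum_add_distrib, ← Finset.mul_sum]
        simp [sq]
    _ ≤ 2 * ((k : ℝ) ^ 2 * Real.logb 2 (((m + 1 : ℕ) : ℝ) / (k : ℝ) ^ 2 + 1))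
          + (k : ℝ) ^ 2 := by
        gcongr
        exact hj.trans (by gcongr)
    _ = _ := by ring

/-- **A single universal code achieving the first-order empirical entropy.**
For all `k ≥ 2`, `n ≥ 2` there is one Kraft length function `L̂` on `[k]^n` with
`L̂(x^n) ≤ 2k² log₂(n/k² + 1) + k² + log₂ k + (n−1) H₁(x^n) + 3` for every `x^n`. -/
theorem universal_code_empirical_entropy (k n : ℕ) (hk : 2 ≤ k) (hn : 2 ≤ n) :
    ∃ L : (Fin n → Fin k) → ℕ, Kraft L ∧
      ∀ x : Fin n → Fin k,
        (L x : ℝ) ≤ 2 * (k : ℝ) ^ 2 * Real.logb 2 ((n : ℝ) / (k : ℝ) ^ 2 + 1)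
          + (k : ℝ) ^ 2 + Real.logb 2 (k : ℝ) + ((n : ℝ) - 1) * empEntropy1 x + 3 := by
  obtain ⟨m, rfl⟩ : ∃ m, n = m + 1 := ⟨n - 1, by omega⟩
  have hk0 : 0 < k := by omega
  refine ⟨fun x => ⌈-Real.logb 2 (codeProb x)⌉₊, ?_, fun x => ?_⟩
  · refine (Finset.sum_le_sum fun x _ => ?_).trans (sum_codeProb_le k m)
    rw [← Real.rpow_intCast]
    push_cast
    calc (2 : ℝ) ^ (-(⌈-Real.logb 2 (codeProb x)⌉₊ : ℝ))
        ≤ (2 : ℝ) ^ (Real.logb 2 (codeProb x)) := by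
          refine Real.rpow_le_rpow_of_exponent_le (by norm_num) ?_
          linarith [Nat.le_ceil (-Real.logb 2 (codeProb x))]
      _ = codeProb x := Real.rpow_logb (by norm_num) (by norm_num) (codeProb_pos hk0 x)
  · have h0 : 0 ≤ -Real.logb 2 (codeProb x) :=
      neg_nonneg.mpr (Real.logb_nonpos (by norm_num) (codeProb_pos hk0 x).le (codeProb_le_one x))
    have h1 := Nat.ceil_lt_add_one h0
    have h2 := neg_logb_codeProb hk0 (by omega) x
    have h3 := matrix_cost_le hk0 x
    have h4 : ((m + 1 : ℕ) : ℝ) - 1 = m := by push_cast; ring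
    rw [h4]
    linarith

end Stmt14
end

section
/- Let K be a reversible k×k row-stochastic matrix with stationary distribution π having positive entries, S = {(a,b) : K_{ab} > 0}, K̃((a,b),(c,d)) = 1[b = c]·K(c,d) the tuple-chain kernel on S, and K̃* its multiplicative reversibilization with respect to π̃(a,b) = π_a K_{ab}. Let T be the involution matrix on S acting by (T M)((a,b),(c,d)) = M((b,a),(c,d)) (note (a,b) ∈ S implies (b,a) ∈ S by reversibility). Then T K̃ T = K̃*, and consequently for every integer r ≥ 1, (K̃*)^r K̃^r = (T K̃^r)². -/
/-!
Left and right multiplication by `T` swap the coordinates of the row and column index, so the entry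
of `T K̃ T` at `((a,b),(c,d))` is `1[a = d] K_{dc}`. The corresponding entry of `K̃*` is
`1[d = a] π_c K_{cd} K_{ab} / (π_a K_{ab})`, and detailed balance `π_c K_{cd} = π_d K_{dc}` makes the
two equal. Since `T² = 1`, conjugation by `T` commutes with powers, whence
`(K̃*)^r K̃^r = T K̃^r T K̃^r`.
-/

open scoped BigOperators

namespace Stmt16

attribute [local instance] Classical.propDecidable

noncomputable section

variable {k : ℕ}

/-- The state space `S = {(a,b) : K_{ab} > 0}` of the chain over consecutive tuples. -/
def TupleState (K : Matrix (Fin k) (Fin k) ℝ) : Type :=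
  {p : Fin k × Fin k // 0 < K p.1 p.2}

instance (K : Matrix (Fin k) (Fin k) ℝ) : Fintype (TupleState K) :=
  Subtype.fintype _

instance (K : Matrix (Fin k) (Fin k) ℝ) : DecidableEq (TupleState K) :=
  Subtype.instDecidableEq

/-- The kernel `K̃((a,b),(c,d)) = 1[b = c]·K(c,d)` of the tuple chain. -/
def Ktil (K : Matrix (Fin k) (Fin k) ℝ) : Matrix (TupleState K) (TupleState K) ℝ :=
  Matrix.of fun p q => if p.1.2 = q.1.1 then K q.1.1 q.1.2 else 0

/-- The stationary distribution `π̃(a,b) = π_a K_{ab}` of the tuple chain. -/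
def piTil (K : Matrix (Fin k) (Fin k) ℝ) (π : Fin k → ℝ) (p : TupleState K) : ℝ :=
  π p.1.1 * K p.1.1 p.1.2

/-- The multiplicative reversibilization
`K̃*((a,b),(c,d)) = π̃(c,d)·K̃((c,d),(a,b)) / π̃(a,b)`. -/
def Kstar (K : Matrix (Fin k) (Fin k) ℝ) (π : Fin k → ℝ) :
    Matrix (TupleState K) (TupleState K) ℝ :=
  Matrix.of fun p q => piTil K π q * Ktil K q p / piTil K π p


/-- The coordinate-swap involution matrix `T` on `S`, acting on matrices by
`(T M)((a,b),(c,d)) = M((b,a),(c,d))`. -/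
def swapT (K : Matrix (Fin k) (Fin k) ℝ) : Matrix (TupleState K) (TupleState K) ℝ :=
  Matrix.of fun p q => if q.1 = (p.1.2, p.1.1) then 1 else 0

/-- The swapped pair `(b,a)`, a state again because reversibility makes `K_{ab} > 0` symmetric. -/
def TupleState.swap {K : Matrix (Fin k) (Fin k) ℝ} (hsymm : ∀ i j, 0 < K i j → 0 < K j i)
    (p : TupleState K) : TupleState K :=
  ⟨(p.1.2, p.1.1), hsymm _ _ p.2⟩

lemma pos_symm_of_reversible {K : Matrix (Fin k) (Fin k) ℝ} {π : Fin k → ℝ}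
    (hπ0 : ∀ i, 0 < π i) (hrev : ∀ i j, π i * K i j = π j * K j i) (i j : Fin k)
    (h : 0 < K i j) : 0 < K j i := by
  have h1 : 0 < π j * K j i := hrev i j ▸ mul_pos (hπ0 i) h
  exact (mul_pos_iff_of_pos_left (hπ0 j)).1 h1

lemma swapT_apply {K : Matrix (Fin k) (Fin k) ℝ} (hsymm : ∀ i j, 0 < K i j → 0 < K j i)
    (p q : TupleState K) : swapT K p q = if q = p.swap hsymm then 1 else 0 := by
  have h : q.1 = (p.1.2, p.1.1) ↔ q = p.swap hsymm :=
    ⟨fun h => Subtype.ext h, fun h => congrArg Subtype.val h⟩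
  simp only [swapT, Matrix.of_apply, h]

lemma swapT_mul_apply {K : Matrix (Fin k) (Fin k) ℝ} (hsymm : ∀ i j, 0 < K i j → 0 < K j i)
    (M : Matrix (TupleState K) (TupleState K) ℝ) (p q : TupleState K) :
    (swapT K * M) p q = M (p.swap hsymm) q := by
  simp [Matrix.mul_apply, swapT_apply hsymm]

lemma mul_swapT_apply {K : Matrix (Fin k) (Fin k) ℝ} (hsymm : ∀ i j, 0 < K i j → 0 < K j i)
    (M : Matrix (TupleState K) (TupleState K) ℝ) (p q : TupleState K) :
    (M * swapT K) p q = M p (q.swap hsymm) := by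
  have h : ∀ x : TupleState K, q = x.swap hsymm ↔ x = q.swap hsymm := fun x =>
    ⟨fun h => h ▸ rfl, fun h => h ▸ rfl⟩
  simp [Matrix.mul_apply, swapT_apply hsymm, h]

lemma swapT_mul_self {K : Matrix (Fin k) (Fin k) ℝ} (hsymm : ∀ i j, 0 < K i j → 0 < K j i) :
    swapT K * swapT K = 1 := by
  ext p q
  rw [swapT_mul_apply hsymm, swapT_apply hsymm, Matrix.one_apply]
  exact if_congr eq_comm rfl rfl

lemma conj_pow_of_mul_self {M : Type*} [Monoid M] {t : M} (ht : t * t = 1) (x : M) (r : ℕ) :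
    (t * x * t) ^ r = t * x ^ r * t := by
  induction r with
  | zero => simp [ht]
  | succ n ih =>
    calc (t * x * t) ^ (n + 1) = t * x ^ n * (t * t) * x * t := by
          rw [pow_succ, ih]; simp only [mul_assoc]
      _ = t * x ^ (n + 1) * t := by rw [ht, pow_succ]; simp only [mul_one, mul_assoc]

/-- **Conjugation by the swap involution produces the reversibilization.**
For a reversible `K` with everywhere-positive stationary distribution `π`,
`T K̃ T = K̃*`, and consequently `(K̃*)^r K̃^r = (T K̃^r)²` for every `r ≥ 1`. -/
theorem swap_conj_Ktil_eq_Kstar (K : Matrix (Fin k) (Fin k) ℝ) (π : Fin k → ℝ)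
    (hK0 : ∀ i j, 0 ≤ K i j) (hK1 : ∀ i, ∑ j, K i j = 1)
    (hπ0 : ∀ i, 0 < π i) (hπ1 : ∑ i, π i = 1)
    (hrev : ∀ i j, π i * K i j = π j * K j i) :
    swapT K * Ktil K * swapT K = Kstar K π ∧
    ∀ r : ℕ, 1 ≤ r →
      Kstar K π ^ r * Ktil K ^ r = (swapT K * Ktil K ^ r) ^ 2 := by
  have hsymm := pos_symm_of_reversible hπ0 hrev
  have hconj : swapT K * Ktil K * swapT K = Kstar K π := by
    ext p q
    rw [mul_swapT_apply hsymm, swapT_mul_apply hsymm]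
    obtain ⟨⟨a, b⟩, hab⟩ := p
    obtain ⟨⟨c, d⟩, hcd⟩ := q
    change 0 < K a b at hab
    change (if a = d then K d c else 0) =
      π c * K c d * (if d = a then K a b else 0) / (π a * K a b)
    by_cases h : a = d
    · subst h
      have hπa := (hπ0 a).ne'
      have hab' := hab.ne'
      rw [if_pos rfl, if_pos rfl, hrev c a]
      field_simp
    · rw [if_neg h, if_neg (Ne.symm h)]
      simp
  refine ⟨hconj, fun r _ => ?_⟩
  rw [← hconj, conj_pow_of_mul_self (swapT_mul_self hsymm), sq]
  simp only [mul_assoc]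

end

end Stmt16
end

section
/- Let K be a k×k row-stochastic matrix and let M be the k²×k² matrix indexed by ordered pairs, with entries M((a,b),(c,d)) = K(a,c)·K(c,d). Then K and M have identical nonzero eigenvalues: a complex number η ≠ 0 is an eigenvalue of M if and only if it is an eigenvalue of K. -/
/-!
The matrix `M` factors as `A * B`, where the rectangular matrices
`A (a, b) c = K a c` and `B c (c', d) = δ_{c c'} K c' d` satisfy `B * A = K`, because the rows
of `K` sum to one. The characteristic polynomials of `A * B` and `B * A` agree up to powers of
`X`, so the two products have the same nonzero eigenvalues.
-/

open scoped BigOperators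

/-- The products `A * B` and `B * A` of rectangular matrices have the same nonzero spectrum. -/
theorem mem_spectrum_mul_comm_of_ne_zero {m n : Type*} [Fintype m] [Fintype n] [DecidableEq m]
    [DecidableEq n] (A : Matrix m n ℂ) (B : Matrix n m ℂ) (η : ℂ) (hη : η ≠ 0) :
    η ∈ spectrum ℂ (A * B) ↔ η ∈ spectrum ℂ (B * A) := by
  rw [Matrix.mem_spectrum_iff_isRoot_charpoly, Matrix.mem_spectrum_iff_isRoot_charpoly]
  have h := congrArg (Polynomial.eval η) (Matrix.charpoly_mul_comm' A B)
  simp only [Polynomial.eval_mul, Polynomial.eval_pow, Polynomial.eval_X] at h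
  simp only [Polynomial.IsRoot.def]
  constructor
  · intro h0
    simpa [h0, hη] using h
  · intro h0
    simpa [h0, hη] using h

/-- **The tuple-chain comparison matrix has the same nonzero spectrum as `K`.**
Let `K` be a `k×k` row-stochastic matrix and let `M` be the `k²×k²` matrix with
entries `M((a,b),(c,d)) = K(a,c)·K(c,d)`.  Then a nonzero `η ∈ ℂ` is an eigenvalue
of `M` iff it is an eigenvalue of `K`. -/
theorem tuple_matrix_nonzero_spectrum (k : ℕ) (K : Matrix (Fin k) (Fin k) ℝ)
    (hK0 : ∀ i j, 0 ≤ K i j) (hK1 : ∀ i, ∑ j, K i j = 1)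
    (η : ℂ) (hη : η ≠ 0) :
    η ∈ spectrum ℂ
        ((Matrix.of fun p q : Fin k × Fin k => K p.1 q.1 * K q.1 q.2).map
          (Complex.ofReal ·)) ↔
      η ∈ spectrum ℂ (K.map (Complex.ofReal ·)) := by
  let A : Matrix (Fin k × Fin k) (Fin k) ℂ := Matrix.of fun p c => (K p.1 c : ℂ)
  let B : Matrix (Fin k) (Fin k × Fin k) ℂ :=
    Matrix.of fun c q => if c = q.1 then (K q.1 q.2 : ℂ) else 0
  have hAB : (Matrix.of fun p q : Fin k × Fin k => K p.1 q.1 * K q.1 q.2).map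
      (Complex.ofReal ·) = A * B := by
    ext p q
    simp [A, B, Matrix.mul_apply]
  have hBA : K.map (Complex.ofReal ·) = B * A := by
    ext c e
    have h1 : ∑ d, (K c d : ℂ) = 1 := by exact_mod_cast hK1 c
    simp only [A, B, Matrix.mul_apply, Matrix.map_apply, Matrix.of_apply,
      Fintype.sum_prod_type, ite_mul, zero_mul]
    rw [Finset.sum_comm]
    simp [← Finset.sum_mul, h1]
  rw [hAB, hBA]
  exact mem_spectrum_mul_comm_of_ne_zero A B η hη
end
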